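/- Let w be an integer with γ^w = 2 in F_q (w = ind_γ 2). Then there exist rational integers c_3, c_4, …, c_l such that J_{2l²}(1, l²) ≡ ζ_{l²}^{−w}·(−1 + Σ_{i=3}^{l} c_i (ζ_{l²} − 1)^i) (mod (1−ζ_{l²})^{l+1}). -/

import Mathlib

open Complex Finset

/-- The `i`-th power character: `χ^i(v) = χ(v)^i` for `v ≠ 0`, with the convention
`χ^i(0) = 0` (in particular `χ^0(0) = 0`). -/
noncomputable def charPow {F : Type*} [DecidableEq F] [Zero F] (χ : F → ℂ) (i : ℤ) (v : F) : ℂ :=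
  if v = 0 then 0 else χ v ^ i

/-- The Jacobi sum `J_e(i,j) = ∑_{v ∈ F_q} χ_e^i(v) χ_e^j(v+1)`. -/
noncomputable def jSum {F : Type*} [Field F] [Fintype F] [DecidableEq F]
    (χ : F → ℂ) (i j : ℤ) : ℂ :=
  ∑ v : F, charPow χ i v * charPow χ j (v + 1)

/-!
Let `ψ`, `φ` be characters with `ψ ^ n = φ ^ n = 1`, `n` odd, and `μ` a primitive `n`-th root of
unity. Up to character sums, which are divisible by `n`, the Jacobi sum `J(ψ, φ) + 1` is
`∑ x, (ψ x - 1) * (φ (1 - x) - 1)`, a sum of products of two multiples of `μ - 1`. Averaging over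
`x ↦ x⁻¹` produces a third such factor, and `2` is coprime to `n`, so `J(ψ, φ) ≡ -1` modulo
`(μ - 1) ^ 3`.

If `χ` has order `2 * n`, then `η = χ ^ n` is the quadratic character. The substitution `x ↦ x⁻¹`
turns `J(χ, η)` into `J(ψ, η)` with `ψ = (χ * η)⁻¹` of odd order, and completing the square turns
that into `ψ 4 * J(ψ, ψ) = χ 4⁻¹ * J(ψ, ψ)`. It remains to expand the multiple of `(μ - 1) ^ 3` in
powers of `μ - 1`.
-/

section CubicCongruence

variable {F R : Type*} [Field F] [CommRing R] {n : ℕ} {μ : R} {χ φ : MulChar F R}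

lemma inv_symmetrized_apply_sub_one_mul_apply_sub_one (hφ : φ (-1) = 1) {x : F} (hx : x ≠ 0) :
    (χ x - 1) * (φ (1 - x) - 1) + (χ x⁻¹ - 1) * (φ (1 - x⁻¹) - 1) - (χ x - 1) * (φ x - 1) =
      (χ x - 1) * (φ (1 - x) - φ x) * (1 - (χ * φ) x⁻¹) := by
  have hφ_one_sub : φ (1 - x⁻¹) = φ (1 - x) * φ x⁻¹ := by
    rw [show 1 - x⁻¹ = -1 * ((1 - x) * x⁻¹) by field_simp; ring, map_mul, hφ, one_mul, map_mul]
  have hχ_inv : χ x * χ x⁻¹ = 1 := by rw [← map_mul, mul_inv_cancel₀ hx, map_one]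
  have hφ_inv : φ x * φ x⁻¹ = 1 := by rw [← map_mul, mul_inv_cancel₀ hx, map_one]
  rw [hφ_one_sub, MulChar.mul_apply]
  linear_combination (φ (1 - x) - φ x) * φ x⁻¹ * hχ_inv - (1 - χ x⁻¹) * hφ_inv

variable [IsDomain R]

lemma sub_one_dvd_mulChar_apply_sub_one [Finite F] [NeZero n] (hχ : χ ^ n = 1)
    (hμ : IsPrimitiveRoot μ n) {x : F} (hx : x ≠ 0) : μ - 1 ∣ χ x - 1 := by
  obtain ⟨k, -, hk⟩ := MulChar.exists_apply_eq_pow hχ hμ hx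
  exact hk ▸ sub_one_dvd_pow_sub_one μ k

-- The summand `1` of `(χ x - 1) * (φ x - 1)` is written as the trivial character, so that the
-- statement also holds at `x = 0`, where `0⁻¹ = 0`.
lemma sub_one_cube_dvd_inv_symmetrized [Finite F] (hn : Odd n) (hχ : χ ^ n = 1) (hφ : φ ^ n = 1)
    (hμ : IsPrimitiveRoot μ n) (x : F) :
    (μ - 1) ^ 3 ∣ (χ x - 1) * (φ (1 - x) - 1) + (χ x⁻¹ - 1) * (φ (1 - x⁻¹) - 1) -
      ((χ * φ) x - χ x - φ x + (1 : MulChar F R) x) := by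
  have : NeZero n := ⟨hn.pos.ne'⟩
  rcases eq_or_ne x 0 with rfl | hx₀
  · simp [MulChar.map_zero]
  have hone : (1 : MulChar F R) x = 1 := MulChar.one_apply hx₀.isUnit
  have hmul : (χ * φ) x - χ x - φ x + (1 : MulChar F R) x = (χ x - 1) * (φ x - 1) := by
    rw [hone, MulChar.mul_apply]; ring
  rw [hmul, inv_symmetrized_apply_sub_one_mul_apply_sub_one
    (MulChar.val_neg_one_eq_one_of_odd_order hn hφ) hx₀]
  rcases eq_or_ne x 1 with rfl | hx₁
  · simp
  have hχφ : (χ * φ) ^ n = 1 := by rw [mul_pow, hχ, hφ, one_mul]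
  have hχx : μ - 1 ∣ χ x - 1 := sub_one_dvd_mulChar_apply_sub_one hχ hμ hx₀
  have hφx : μ - 1 ∣ φ (1 - x) - φ x := by
    have h := dvd_sub (sub_one_dvd_mulChar_apply_sub_one hφ hμ (sub_ne_zero_of_ne hx₁.symm))
      (sub_one_dvd_mulChar_apply_sub_one hφ hμ hx₀)
    rwa [sub_sub_sub_cancel_right] at h
  have hχφx : μ - 1 ∣ 1 - (χ * φ) x⁻¹ :=
    (dvd_sub_comm).mp (sub_one_dvd_mulChar_apply_sub_one hχφ hμ (inv_ne_zero hx₀))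
  rw [pow_succ, sq]
  exact mul_dvd_mul (mul_dvd_mul hχx hφx) hχφx

variable [Fintype F]

lemma natCast_dvd_sum_mulChar (hq : n ∣ Fintype.card F - 1) (χ : MulChar F R) :
    (n : R) ∣ ∑ x, χ x := by
  classical
  rcases eq_or_ne χ 1 with rfl | hχ
  · rw [MulChar.sum_one_eq_card_units, Fintype.card_units]
    exact Nat.cast_dvd_cast hq
  · rw [MulChar.sum_eq_zero_of_ne_one hχ]
    exact dvd_zero _

lemma sub_one_cube_dvd_natCast (hn₃ : 3 < n) (hμ : IsPrimitiveRoot μ n) :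
    (μ - 1) ^ 3 ∣ (n : R) := by
  obtain ⟨z, -, hz⟩ := hμ.self_sub_one_pow_dvd_order hn₃
  exact Dvd.intro_left z hz.symm

lemma sub_one_cube_dvd_sum_apply_sub_one_mul (hn : Odd n) (hn₃ : 3 < n)
    (hq : n ∣ Fintype.card F - 1) (hχ : χ ^ n = 1) (hφ : φ ^ n = 1) (hμ : IsPrimitiveRoot μ n) :
    (μ - 1) ^ 3 ∣ ∑ x : F, (χ x - 1) * (φ (1 - x) - 1) := by
  have hμn := sub_one_cube_dvd_natCast hn₃ hμ
  have hchar (θ : MulChar F R) : (μ - 1) ^ 3 ∣ ∑ x, θ x :=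
    hμn.trans (natCast_dvd_sum_mulChar hq θ)
  have hsymm := dvd_sum fun x (_ : x ∈ univ) ↦ sub_one_cube_dvd_inv_symmetrized hn hχ hφ hμ x
  have hinv : ∑ x : F, (χ x⁻¹ - 1) * (φ (1 - x⁻¹) - 1) = ∑ x : F, (χ x - 1) * (φ (1 - x) - 1) :=
    Equiv.sum_comp (Equiv.inv F) fun x ↦ (χ x - 1) * (φ (1 - x) - 1)
  rw [sum_sub_distrib, sum_add_distrib, hinv, ← two_mul, sum_add_distrib, sum_sub_distrib,
    sum_sub_distrib, dvd_sub_left (dvd_add (dvd_sub (dvd_sub (hchar _) (hchar _)) (hchar _))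
      (hchar _))] at hsymm
  have hcop : IsCoprime (n : R) 2 := by
    exact_mod_cast (Nat.isCoprime_iff_coprime.mpr (Nat.coprime_two_right.mpr hn)).intCast (R := R)
  exact (hcop.of_isCoprime_of_dvd_left hμn).dvd_of_dvd_mul_left hsymm

lemma sub_one_cube_dvd_jacobiSum_add_one (hn : Odd n) (hn₃ : 3 < n)
    (hq : n ∣ Fintype.card F - 1) (hχ : χ ^ n = 1) (hφ : φ ^ n = 1) (hμ : IsPrimitiveRoot μ n) :
    (μ - 1) ^ 3 ∣ jacobiSum χ φ + 1 := by
  have hμn := sub_one_cube_dvd_natCast hn₃ hμ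
  have hchar (θ : MulChar F R) : (μ - 1) ^ 3 ∣ ∑ x, θ x :=
    hμn.trans (natCast_dvd_sum_mulChar hq θ)
  have hcard : (μ - 1) ^ 3 ∣ (Fintype.card F : R) - 1 := by
    rw [← Nat.cast_pred Fintype.card_pos]
    exact hμn.trans (Nat.cast_dvd_cast hq)
  have hexpand : jacobiSum χ φ + 1 = ∑ x : F, (χ x - 1) * (φ (1 - x) - 1) +
      ∑ x, χ x + ∑ x, φ x - (Fintype.card F - 1) := by
    have hφ_sum : ∑ x, φ (1 - x) = ∑ x, φ x := (Equiv.subLeft (1 : F)).sum_comp φ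
    simp only [jacobiSum, sub_mul, mul_sub, sum_sub_distrib, one_mul, mul_one, sum_const, card_univ,
      nsmul_eq_mul, hφ_sum]
    ring
  rw [hexpand]
  exact dvd_sub (dvd_add (dvd_add (sub_one_cube_dvd_sum_apply_sub_one_mul hn hn₃ hq hχ hφ hμ)
    (hchar χ)) (hchar φ)) hcard

end CubicCongruence

section Descent

lemma exists_ringHomComp_subtype_eq {M R : Type*} [CommMonoid M] [CommRing R] (S : Subring R)
    (χ : MulChar M R) (hχ : ∀ x, χ x ∈ S) : ∃ χ' : MulChar M S, χ'.ringHomComp S.subtype = χ :=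
  ⟨{ toFun x := ⟨χ x, hχ x⟩
     map_one' := Subtype.ext χ.map_one
     map_mul' x y := Subtype.ext (map_mul χ x y)
     map_nonunit' _ hx := Subtype.ext (χ.map_nonunit hx) }, rfl⟩

lemma exists_jacobiSum_eq_neg_one_add_mul_cube {F R : Type*} [Field F] [Fintype F] [CommRing R]
    [IsDomain R] {n : ℕ} {μ : R} {χ φ : MulChar F R} (hn : Odd n) (hn₃ : 3 < n)
    (hq : n ∣ Fintype.card F - 1) (hχ : χ ^ n = 1) (hφ : φ ^ n = 1) (hμ : IsPrimitiveRoot μ n) :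
    ∃ z ∈ Algebra.adjoin ℤ {μ}, jacobiSum χ φ = -1 + (μ - 1) ^ 3 * z := by
  have : NeZero n := ⟨hn.pos.ne'⟩
  let S : Subring R := (Algebra.adjoin ℤ {μ}).toSubring
  have hS : Function.Injective S.subtype := S.subtype_injective
  obtain ⟨χ', rfl⟩ := exists_ringHomComp_subtype_eq S χ
    (MulChar.apply_mem_algebraAdjoin_of_pow_eq_one hχ hμ)
  obtain ⟨φ', rfl⟩ := exists_ringHomComp_subtype_eq S φ
    (MulChar.apply_mem_algebraAdjoin_of_pow_eq_one hφ hμ)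
  rw [MulChar.ringHomComp_pow, MulChar.ringHomComp_eq_one_iff hS] at hχ hφ
  let μ' : S := ⟨μ, Algebra.self_mem_adjoin_singleton ℤ μ⟩
  have hμ' : IsPrimitiveRoot μ' n := .of_map_of_injective (f := S.subtype) hμ hS
  obtain ⟨z, hz⟩ := sub_one_cube_dvd_jacobiSum_add_one hn hn₃ hq hχ hφ hμ'
  refine ⟨z, z.2, ?_⟩
  rw [jacobiSum_ringHomComp, eq_sub_of_add_eq hz, map_sub, map_mul, map_one, neg_add_eq_sub]
  rfl

end Descent

section JacobiSumTransformations

lemma neg_one_ne_one_of_mulChar_sq_eq_one {M R : Type*} [CommMonoid M] [CommRing R] [IsDomain R]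
    {η : MulChar M R} (hη : η ^ 2 = 1) (hη₁ : η ≠ 1) : (-1 : R) ≠ 1 := by
  refine fun hneg ↦ hη₁ (MulChar.ext fun u ↦ ?_)
  have hsq : η u ^ 2 = 1 := by rw [← MulChar.pow_apply_coe, hη, MulChar.one_apply_coe]
  rw [MulChar.one_apply_coe]
  exact (sq_eq_one_iff.mp hsq).elim id fun h ↦ h.trans hneg

variable {F R : Type*} [Field F] [CommRing R]

lemma mulChar_eq_of_sq_eq_one_of_ne_one [IsDomain R] [Finite F] {η θ : MulChar F R} (hη : η ^ 2 = 1)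
    (hη₁ : η ≠ 1) (hθ : θ ^ 2 = 1) (hθ₁ : θ ≠ 1) : η = θ := by
  obtain ⟨g, hg⟩ := IsCyclic.exists_generator (α := Fˣ)
  have apply_generator {ψ : MulChar F R} (hψ : ψ ^ 2 = 1) (hψ₁ : ψ ≠ 1) : ψ g = -1 := by
    have hsq : ψ g ^ 2 = 1 := by rw [← MulChar.pow_apply_coe, hψ, MulChar.one_apply_coe]
    refine (sq_eq_one_iff.mp hsq).resolve_left ?_
    rwa [← MulChar.one_apply_coe (R' := R) g, ← MulChar.eq_iff hg]
  rw [MulChar.eq_iff hg, apply_generator hη hη₁, apply_generator hθ hθ₁]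

lemma ringChar_ne_two_of_mulChar_sq_eq_one [Finite F] {η : MulChar F R} (hη : η ^ 2 = 1)
    (hη₁ : η ≠ 1) : ringChar F ≠ 2 := by
  have := Fintype.ofFinite F
  intro hF
  have heven := FiniteField.even_card_of_char_two hF
  have hdvd := orderOf_eq_prime hη hη₁ ▸ η.orderOf_dvd_card_sub_one
  have hpos := Fintype.card_pos (α := F)
  omega

variable [Fintype F]

lemma jacobiSum_eq_apply_neg_one_mul_jacobiSum_mul_inv (χ φ : MulChar F R) :
    jacobiSum χ φ = φ (-1) * jacobiSum (χ * φ)⁻¹ φ := by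
  rw [jacobiSum, jacobiSum, mul_sum, ← Equiv.sum_comp (Equiv.inv F)]
  refine sum_congr rfl fun x _ ↦ ?_
  rcases eq_or_ne x 0 with rfl | hx
  · simp [MulChar.map_zero]
  rw [Equiv.inv_apply, show 1 - x⁻¹ = -1 * ((1 - x) * x⁻¹) by field_simp; ring, map_mul, map_mul,
    MulChar.inv_apply', MulChar.mul_apply]
  ring

variable [IsDomain R] {η : MulChar F R}

lemma mulChar_eq_quadraticChar [DecidableEq F] (hη : η ^ 2 = 1) (hη₁ : η ≠ 1) :
    η = (quadraticChar F).ringHomComp (Int.castRingHom R) := by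
  refine mulChar_eq_of_sq_eq_one_of_ne_one hη hη₁ ((quadraticChar_isQuadratic F).comp _).sq_eq_one
    fun hone ↦ ?_
  obtain ⟨u, hu⟩ := quadraticChar_exists_neg_one' (ringChar_ne_two_of_mulChar_sq_eq_one hη hη₁)
  have hu' := congrArg (fun θ : MulChar F R ↦ θ u) hone
  simp only [MulChar.ringHomComp_apply, hu, eq_intCast, Int.cast_neg, Int.cast_one,
    MulChar.one_apply_coe] at hu'
  exact neg_one_ne_one_of_mulChar_sq_eq_one hη hη₁ hu'

lemma sum_comp_sq_eq_sum_mul_one_add (hη : η ^ 2 = 1) (hη₁ : η ≠ 1) (f : F → R) :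
    ∑ t, f (t ^ 2) = ∑ u, f u * (1 + η u) := by
  classical
  rw [← sum_fiberwise univ (· ^ 2)]
  refine sum_congr rfl fun u _ ↦ ?_
  have hcard : (#{t : F | t ^ 2 = u} : R) = 1 + η u := by
    have h := quadraticChar_card_sqrts (ringChar_ne_two_of_mulChar_sq_eq_one hη hη₁) u
    rw [mulChar_eq_quadraticChar hη hη₁, MulChar.ringHomComp_apply, add_comm, eq_intCast]
    rw [Set.toFinset_ofPred] at h
    exact_mod_cast congrArg (Int.cast (R := R)) h
  rw [← hcard, mul_comm, ← nsmul_eq_mul, ← sum_const]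
  exact sum_congr rfl fun t ht ↦ congrArg f (mem_filter.mp ht).2

lemma jacobiSum_quadratic_eq_apply_four_mul_jacobiSum_self (hη : η ^ 2 = 1) (hη₁ : η ≠ 1)
    {ψ : MulChar F R} (hψ : ψ ≠ 1) : jacobiSum ψ η = ψ 4 * jacobiSum ψ ψ := by
  have h2 : (2 : F) ≠ 0 := Ring.two_ne_zero (ringChar_ne_two_of_mulChar_sq_eq_one hη hη₁)
  have hψ_sum : ∑ u, ψ (1 - u) = 0 :=
    ((Equiv.subLeft (1 : F)).sum_comp ψ).trans (MulChar.sum_eq_zero_of_ne_one hψ)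
  calc jacobiSum ψ η
      = ∑ u, ψ (1 - u) * (1 + η u) := by
        rw [jacobiSum_comm, jacobiSum]
        simp only [mul_add, mul_one, sum_add_distrib, hψ_sum, zero_add]
        exact sum_congr rfl fun _ _ ↦ mul_comm _ _
    _ = ∑ t, ψ (1 - t ^ 2) := (sum_comp_sq_eq_sum_mul_one_add hη hη₁ fun u ↦ ψ (1 - u)).symm
    _ = ∑ x, ψ (1 - (2 * x - 1) ^ 2) :=
        (((Equiv.mulLeft₀ 2 h2).trans (Equiv.subRight 1)).sum_comp fun t ↦ ψ (1 - t ^ 2)).symm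
    _ = ψ 4 * jacobiSum ψ ψ := by
        rw [jacobiSum, mul_sum]
        refine sum_congr rfl fun x _ ↦ ?_
        rw [← map_mul, ← map_mul]
        congr 1
        ring

end JacobiSumTransformations

section JSum

variable {F : Type*} [Field F] [DecidableEq F]

lemma charPow_mulChar (χ : MulChar F ℂ) (i : ℤ) (v : F) : charPow χ i v = (χ ^ i) v := by
  rcases eq_or_ne v 0 with rfl | hv
  · simp [charPow, MulChar.map_zero]
  · rw [charPow, if_neg hv, ← Units.val_mk0 hv, MulChar.zpow_apply_coe, Units.val_zpow_eq_zpow_val]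
    exact (map_zpow₀ χ.toMonoidWithZeroHom v i).symm

variable [Fintype F]

lemma jSum_mulChar (χ : MulChar F ℂ) (i j : ℤ) :
    jSum χ i j = (χ ^ i) (-1) * jacobiSum (χ ^ i) (χ ^ j) := by
  rw [jSum, jacobiSum, mul_sum, ← Equiv.sum_comp (Equiv.neg F)]
  refine sum_congr rfl fun v _ ↦ ?_
  rw [charPow_mulChar, charPow_mulChar, Equiv.neg_apply, neg_add_eq_sub, ← mul_assoc, ← map_mul,
    neg_one_mul]

lemma jSum_one_natCast_eq_apply_inv_four_mul_jacobiSum_self {χ : MulChar F ℂ} {n : ℕ}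
    (hn : Odd n) (hn₁ : 1 < n) (hχ : orderOf χ = 2 * n) :
    jSum χ 1 n = χ 4⁻¹ * jacobiSum (χ ^ (n + 1))⁻¹ (χ ^ (n + 1))⁻¹ := by
  set η : MulChar F ℂ := χ ^ n with hη_def
  set ψ : MulChar F ℂ := (χ ^ (n + 1))⁻¹ with hψ_def
  have hη : η ^ 2 = 1 := by rw [← pow_mul, mul_comm, ← hχ, pow_orderOf_eq_one]
  have hη₁ : η ≠ 1 := pow_ne_one_of_lt_orderOf (by omega) (by omega)
  have hψ₁ : ψ ≠ 1 := inv_ne_one.mpr (pow_ne_one_of_lt_orderOf (by omega) (by omega))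
  have hψ : (χ * η)⁻¹ = ψ := by rw [hψ_def, pow_succ']
  have hneg : χ (-1) * η (-1) = 1 := by
    rw [← MulChar.mul_apply, hη_def, ← pow_succ', MulChar.pow_apply' _ n.add_one_ne_zero, ← map_pow,
      hn.add_one.neg_one_pow, map_one]
  have hψ4 : ψ 4 = χ 4⁻¹ := by
    have h2 : (2 : F) ≠ 0 := Ring.two_ne_zero (ringChar_ne_two_of_mulChar_sq_eq_one hη hη₁)
    have hη4 : η 4⁻¹ = 1 := by
      rw [show (4⁻¹ : F) = 2⁻¹ ^ 2 by norm_num, map_pow, ← MulChar.pow_apply' _ two_ne_zero, hη,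
        MulChar.one_apply (inv_ne_zero h2).isUnit]
    rw [← hψ, MulChar.inv_apply', MulChar.mul_apply, hη4, mul_one]
  rw [jSum_mulChar, zpow_one, zpow_natCast, jacobiSum_eq_apply_neg_one_mul_jacobiSum_mul_inv,
    ← mul_assoc, hneg, one_mul, hψ,
    jacobiSum_quadratic_eq_apply_four_mul_jacobiSum_self hη hη₁ hψ₁, hψ4]

end JSum

section Expansion

open Polynomial

lemma X_pow_dvd_sub_sum_Ico_coeff {R : Type*} [CommRing R] {m : ℕ} {p : R[X]} (hp : X ^ m ∣ p)
    (k : ℕ) : X ^ k ∣ p - ∑ i ∈ Ico m k, C (p.coeff i) * X ^ i := by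
  rw [X_pow_dvd_iff] at hp ⊢
  intro d hd
  rcases lt_or_ge d m with hdm | hdm
  · simp [coeff_X_pow, hp d hdm]
  · simp [coeff_X_pow, hd, hdm]

lemma exists_sub_one_pow_mul_eq_sum_Ico_add {R : Type*} [CommRing R] {μ y : R}
    (hy : y ∈ Algebra.adjoin ℤ {μ}) (m k : ℕ) :
    ∃ c : ℕ → ℤ, ∃ z ∈ Algebra.adjoin ℤ {μ},
      (μ - 1) ^ m * y = ∑ i ∈ Ico m k, (c i : R) * (μ - 1) ^ i + (μ - 1) ^ k * z := by
  rw [Algebra.adjoin_singleton_eq_range_aeval] at hy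
  obtain ⟨p, rfl⟩ := hy
  obtain ⟨r, hr⟩ := X_pow_dvd_sub_sum_Ico_coeff (Dvd.intro (p.comp (X + 1)) rfl :
    X ^ m ∣ X ^ m * p.comp (X + 1)) k
  have hμ : μ - 1 ∈ Algebra.adjoin ℤ {μ} :=
    sub_mem (Algebra.self_mem_adjoin_singleton ℤ μ) (one_mem _)
  refine ⟨(X ^ m * p.comp (X + 1)).coeff, aeval (μ - 1) r, Algebra.adjoin_le
    (Set.singleton_subset_iff.mpr hμ) (aeval_mem_adjoin_singleton ℤ _), ?_⟩
  have h := congrArg (aeval (μ - 1)) (sub_eq_iff_eq_add'.mp hr)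
  simpa [aeval_comp] using h

end Expansion

section Characters

lemma isIntegral_mulChar_apply {F R : Type*} [Field F] [Finite F] [CommRing R] (χ : MulChar F R)
    (a : F) : IsIntegral ℤ (χ a) := by
  have := Fintype.ofFinite F
  rcases eq_or_ne a 0 with rfl | ha
  · rw [χ.map_zero]
    exact isIntegral_zero
  · refine IsIntegral.of_pow (Nat.sub_pos_of_lt (Fintype.one_lt_card (α := F))) ?_
    rw [← map_pow, FiniteField.pow_card_sub_one_eq_one a ha, map_one]
    exact isIntegral_one

lemma exists_mulChar_coe_eq {F R : Type*} [Field F] [CommRing R] [IsDomain R] {χ : F → R}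
    (hχ₀ : χ 0 = 0) (hχ_mul : ∀ x y, χ (x * y) = χ x * χ y) {g : F} (hg : χ g ≠ 0) :
    ∃ χ' : MulChar F R, ⇑χ' = χ := by
  have hχ₁ : χ 1 = 1 := mul_left_cancel₀ hg (by rw [← hχ_mul, mul_one, mul_one])
  exact ⟨{ toFun := χ, map_one' := hχ₁, map_mul' := hχ_mul, map_nonunit' := by simpa }, rfl⟩

lemma orderOf_mulChar_eq_orderOf_apply {M R : Type*} [CommMonoid M] [CommRing R] {g : Mˣ}
    (hg : ∀ x, x ∈ Subgroup.zpowers g) (χ : MulChar M R) : orderOf χ = orderOf (χ g) :=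
  orderOf_eq_orderOf_iff.mpr fun m ↦ by
    rw [MulChar.eq_iff hg, MulChar.pow_apply_coe, MulChar.one_apply_coe]

end Characters

theorem exists_isIntegral_jSum_one_natCast_sub_div {F : Type*} [Field F] [Fintype F]
    [DecidableEq F] {n : ℕ} (hn : Odd n) (hn₃ : 3 < n) {χ : MulChar F ℂ}
    (hχ : orderOf χ = 2 * n) {μ : ℂ} (hμ : IsPrimitiveRoot μ n) (k : ℕ) :
    ∃ c : ℕ → ℤ,
      IsIntegral ℤ ((jSum χ 1 n - χ 4⁻¹ * (-1 + ∑ i ∈ Icc 3 k, (c i : ℂ) * (μ - 1) ^ i)) /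
        (1 - μ) ^ (k + 1)) := by
  have hψ : ((χ ^ (n + 1))⁻¹) ^ n = 1 := by
    obtain ⟨m, hm⟩ := hn.add_one.two_dvd
    rw [inv_pow, inv_eq_one, ← pow_mul, ← orderOf_dvd_iff_pow_eq_one, hχ, hm]
    exact ⟨m, by ring⟩
  have hq : n ∣ Fintype.card F - 1 :=
    (Dvd.intro_left 2 hχ.symm).trans χ.orderOf_dvd_card_sub_one
  obtain ⟨y, hy, hJ⟩ := exists_jacobiSum_eq_neg_one_add_mul_cube hn hn₃ hq hψ hψ hμ
  obtain ⟨c, z, hz, hyz⟩ := exists_sub_one_pow_mul_eq_sum_Ico_add hy 3 (k + 1)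
  have hμ₁ : 1 - μ ≠ 0 := sub_ne_zero.mpr (hμ.ne_one (by omega)).symm
  have hquot : (jSum χ 1 n - χ 4⁻¹ * (-1 + ∑ i ∈ Icc 3 k, (c i : ℂ) * (μ - 1) ^ i)) /
      (1 - μ) ^ (k + 1) = χ 4⁻¹ * ((-1) ^ (k + 1) * z) := by
    rw [div_eq_iff (pow_ne_zero _ hμ₁), jSum_one_natCast_eq_apply_inv_four_mul_jacobiSum_self hn
      (by omega) hχ, hJ, hyz, Ico_add_one_right_eq_Icc, ← neg_sub 1 μ, neg_pow (1 - μ) (k + 1)]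
    ring
  have hz_int : IsIntegral ℤ z := adjoin_le_integralClosure (hμ.isIntegral (by omega)) hz
  exact ⟨c, hquot ▸ (isIntegral_mulChar_apply χ _).mul ((isIntegral_one.neg.pow _).mul hz_int)⟩

theorem jacobiSum_one_lsq_congruence_general {F : Type*} [Field F] [Fintype F] [DecidableEq F]
    {n : ℕ} (hn : Odd n) (hn₃ : 3 < n) {γ : F} (hγ : ∀ x : F, x ≠ 0 → ∃ k : ℕ, γ ^ k = x)
    {χ : F → ℂ} (hχ₀ : χ 0 = 0) (hχ_mul : ∀ x y, χ (x * y) = χ x * χ y)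
    (hχγ : IsPrimitiveRoot (χ γ) (2 * n)) {w : ℤ} (hw : γ ^ w = 2) (k : ℕ) :
    ∃ c : ℕ → ℤ,
      IsIntegral ℤ ((jSum χ 1 n - (χ γ ^ 2) ^ (-w) *
          (-1 + ∑ i ∈ Icc 3 k, (c i : ℂ) * (χ γ ^ 2 - 1) ^ i)) / (1 - χ γ ^ 2) ^ (k + 1)) := by
  have hχγ₀ : χ γ ≠ 0 := hχγ.ne_zero (by omega)
  obtain ⟨χ, rfl⟩ := exists_mulChar_coe_eq hχ₀ hχ_mul hχγ₀
  have hγ₀ : γ ≠ 0 := by rintro rfl; exact hχγ₀ hχ₀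
  have hγ_gen (x : Fˣ) : x ∈ Subgroup.zpowers (Units.mk0 γ hγ₀) := by
    obtain ⟨m, hm⟩ := hγ x x.ne_zero
    exact ⟨m, Units.ext (by simpa using hm)⟩
  have hχ_order : orderOf χ = 2 * n := by
    rw [orderOf_mulChar_eq_orderOf_apply hγ_gen, Units.val_mk0, hχγ.eq_orderOf]
  have hχ4 : χ 4⁻¹ = (χ γ ^ 2) ^ (-w) := by
    rw [show (4⁻¹ : F) = (γ ^ 2) ^ (-w) by rw [zpow_neg, ← zpow_natCast, zpow_comm, hw]; norm_num,
      ← map_pow]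
    exact map_zpow₀ χ.toMonoidWithZeroHom _ _
  rw [← hχ4]
  exact exists_isIntegral_jSum_one_natCast_sub_div hn hn₃ hχ_order (hχγ.pow (by omega) rfl) k

theorem jacobiSum_one_lsq_congruence {F : Type*} [Field F] [Fintype F] [DecidableEq F]
    (l p r q : ℕ) (hl : l.Prime) (hl3 : 3 ≤ l) (hp : p.Prime) (hr : 0 < r)
    (hq : q = p ^ r) (hql : q % (2 * l ^ 2) = 1) (hcard : Fintype.card F = q)
    (γ : F) (hγ : ∀ x : F, x ≠ 0 → ∃ k : ℕ, γ ^ k = x)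
    (ζ : ℂ) (hζ : ζ = Complex.exp (2 * Real.pi * Complex.I / ((2 * l ^ 2 : ℕ) : ℂ)))
    (ζl : ℂ) (hζl : ζl = ζ ^ 2)
    (χ : F → ℂ) (hχ0 : χ 0 = 0) (hχγ : χ γ = ζ)
    (hχmul : ∀ x y : F, χ (x * y) = χ x * χ y)
    (w : ℤ) (hw : γ ^ w = 2) :
    ∃ c : ℕ → ℤ,
      IsIntegral ℤ ((jSum χ 1 ((l : ℤ) ^ 2) -
          ζl ^ (-w) * (-1 + ∑ i ∈ Finset.Icc 3 l, (c i : ℂ) * (ζl - 1) ^ i)) /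
        (1 - ζl) ^ (l + 1)) := by
  have hζ_prim : IsPrimitiveRoot ζ (2 * l ^ 2) := hζ ▸ isPrimitiveRoot_exp _ (by positivity)
  subst hζl hχγ
  exact_mod_cast jacobiSum_one_lsq_congruence_general (hl.odd_of_ne_two (by omega)).pow
    (by nlinarith) hγ hχ0 hχmul hζ_prim hw l
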